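/- For every m ∈ ℕ and every real p with 0 < p ≤ 2, the function d on ℝ^m defined by d(x,y) := (∑_{i<m} |x_i − y_i|^p)^{1/2} (i.e. ‖x−y‖_p^{p/2}) is Euclidean; in particular, the square root of the ℓ1-distance, d(x,y) = √(‖x−y‖₁), is Euclidean on ℝ^m. -/

import Mathlib

/-!
Fix `0 < p < 2`. The line with the distance `|x - y|^(p/2)` embeds in a Hilbert space because of
the Fourier representation
`∫_{s > 0} ‖exp(i t s) - 1‖² s^(-1-p) ds = C |t|^p`, `C > 0`:
the left side is the squared `L²(0, ∞)` distance between the functions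
`s ↦ (exp(i x s) - 1) s^(-(1+p)/2)` and `s ↦ (exp(i y s) - 1) s^(-(1+p)/2)` when `t = x - y`.
The integral converges since `‖exp(i t s) - 1‖ ≤ min(2, |t s|)` and `0 < p < 2`, and it is
homogeneous of degree `p` in `t` by the substitution `s ↦ |t| s`. For `p = 2` the identity of `ℝ`
is an embedding. An `ℓ²` sum of `m` copies of the one-dimensional embedding then handles `ℝ^m`
(`isEuclidean_pi`), and `p = 1` gives the statement about the `ℓ1`-distance.
-/

/-- A function `d : X → X → ℝ` is Euclidean if it is realized as the norm-distance of a map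
into a real inner product space. -/
def IsEuclidean {X : Type*} (d : X → X → ℝ) : Prop :=
  ∃ (H : Type) (inst : NormedAddCommGroup H),
    letI := inst
    ∃ (_ : InnerProductSpace ℝ H) (Φ : X → H),
      ∀ x y, ‖Φ x - Φ y‖ = d x y

open MeasureTheory Set

/-- The integrand `4 sin²(t s / 2) s^(-1-p) = ‖exp(i t s) - 1‖² s^(-1-p)`. -/
noncomputable def stableDensity (p t s : ℝ) : ℝ :=
  (2 * Real.sin (t * s / 2)) ^ 2 * s ^ (-1 - p)

lemma stableDensity_nonneg (p t : ℝ) {s : ℝ} (hs : 0 < s) : 0 ≤ stableDensity p t s := by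
  unfold stableDensity; positivity

lemma measurable_stableDensity (p t : ℝ) : Measurable (stableDensity p t) := by
  unfold stableDensity; fun_prop

lemma integrableOn_stableDensity {p : ℝ} (hp0 : 0 < p) (hp2 : p < 2) (t : ℝ) :
    IntegrableOn (stableDensity p t) (Ioi 0) := by
  rw [← Ioc_union_Ioi_eq_Ioi (zero_le_one (α := ℝ))]
  refine IntegrableOn.union ?_ ?_
  · have h : IntegrableOn (fun s : ℝ => t ^ 2 * s ^ (1 - p)) (Ioc 0 1) := by
      have := (intervalIntegral.intervalIntegrable_rpow' (a := 0) (b := 1)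
        (r := 1 - p) (by linarith)).const_mul (t ^ 2)
      rwa [intervalIntegrable_iff_integrableOn_Ioc_of_le zero_le_one] at this
    refine Integrable.mono' h (measurable_stableDensity p t).aestronglyMeasurable ?_
    refine (ae_restrict_iff' measurableSet_Ioc).2 (.of_forall fun s hs => ?_)
    rw [Real.norm_of_nonneg (stableDensity_nonneg p t hs.1), stableDensity]
    have h1 : s ^ (1 - p) = s ^ 2 * s ^ (-1 - p) := by
      rw [← Real.rpow_natCast, ← Real.rpow_add hs.1]; congr 1; push_cast; ring
    rw [h1, ← mul_assoc]
    have h2 : (2 * Real.sin (t * s / 2)) ^ 2 ≤ t ^ 2 * s ^ 2 := by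
      rw [← mul_pow]
      apply sq_le_sq.2
      rw [abs_mul]
      have := Real.abs_sin_le_abs (x := t * s / 2)
      rw [abs_div] at this
      norm_num at this ⊢
      linarith
    exact mul_le_mul_of_nonneg_right h2 (Real.rpow_nonneg hs.1.le _)
  · have h : IntegrableOn (fun s : ℝ => 4 * s ^ (-1 - p)) (Ioi 1) :=
      (integrableOn_Ioi_rpow_of_lt (by linarith) one_pos).const_mul 4
    refine Integrable.mono' h (measurable_stableDensity p t).aestronglyMeasurable ?_
    refine (ae_restrict_iff' measurableSet_Ioi).2 (.of_forall fun s hs => ?_)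
    have hs0 : 0 < s := one_pos.trans hs
    rw [Real.norm_of_nonneg (stableDensity_nonneg p t hs0), stableDensity]
    refine mul_le_mul_of_nonneg_right ?_ (Real.rpow_nonneg hs0.le _)
    nlinarith [Real.sin_sq_le_one (t * s / 2)]

lemma integral_stableDensity_one_pos {p : ℝ} (hp0 : 0 < p) (hp2 : p < 2) :
    0 < ∫ s in Ioi 0, stableDensity p 1 s := by
  rw [setIntegral_pos_iff_support_of_nonneg_ae
    ((ae_restrict_iff' measurableSet_Ioi).2 (.of_forall fun s hs => stableDensity_nonneg p 1 hs))
    (integrableOn_stableDensity hp0 hp2 1)]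
  have hsub : Ioo (0 : ℝ) 1 ⊆ Function.support (stableDensity p 1) ∩ Ioi 0 := by
    intro s hs
    refine ⟨?_, hs.1⟩
    have h1 : 0 < Real.sin (1 * s / 2) :=
      Real.sin_pos_of_pos_of_lt_pi (by linarith [hs.1]) (by linarith [hs.2, Real.pi_gt_three])
    have h2 : 0 < s ^ (-1 - p) := Real.rpow_pos_of_pos hs.1 _
    rw [Function.mem_support, stableDensity]
    positivity
  refine lt_of_lt_of_le ?_ (measure_mono hsub)
  simp

lemma integral_stableDensity {p : ℝ} (hp0 : 0 < p) (t : ℝ) :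
    ∫ s in Ioi 0, stableDensity p t s = |t| ^ p * ∫ s in Ioi 0, stableDensity p 1 s := by
  rcases eq_or_ne t 0 with rfl | ht
  · simp [stableDensity, Real.zero_rpow hp0.ne']
  have hpos : 0 < |t| := abs_pos.2 ht
  have key : ∀ s ∈ Ioi (0 : ℝ),
      stableDensity p t s = |t| ^ (1 + p) * stableDensity p 1 (|t| * s) := by
    intro s hs
    have hs' : (0 : ℝ) < s := hs
    have e1 : (2 * Real.sin (1 * (|t| * s) / 2)) ^ 2 = (2 * Real.sin (t * s / 2)) ^ 2 := by
      rcases abs_choice t with h | h <;> rw [h]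
      · rw [one_mul]
      · rw [show 1 * (-t * s) / 2 = -(t * s / 2) by ring, Real.sin_neg]; ring
    have e2 : |t| ^ (1 + p) * |t| ^ (-1 - p) = 1 := by
      rw [← Real.rpow_add hpos]; ring_nf; simp
    rw [stableDensity, stableDensity, e1, Real.mul_rpow hpos.le hs'.le]
    linear_combination (-(2 * Real.sin (t * s / 2)) ^ 2 * s ^ (-1 - p)) * e2
  rw [setIntegral_congr_fun measurableSet_Ioi key, integral_const_mul,
    integral_comp_mul_left_Ioi (stableDensity p 1) 0 hpos, mul_zero, smul_eq_mul, ← mul_assoc,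
    Real.rpow_add hpos, Real.rpow_one]
  field_simp

/-- The curve `t ↦ (s ↦ (exp(i t s) - 1) s^(-(1+p)/2))` realizing the distance up to a constant. -/
noncomputable def stableCurve (p t s : ℝ) : ℂ :=
  (Complex.exp (Complex.I * ((t * s : ℝ) : ℂ)) - 1) * ((s ^ ((-1 - p) / 2) : ℝ) : ℂ)

lemma measurable_stableCurve (p t : ℝ) : Measurable (stableCurve p t) := by
  unfold stableCurve; fun_prop

lemma norm_sq_stableCurve_sub (p x y : ℝ) {s : ℝ} (hs : 0 < s) :
    ‖stableCurve p x s - stableCurve p y s‖ ^ 2 = stableDensity p (x - y) s := by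
  have h : stableCurve p x s - stableCurve p y s =
      Complex.exp (Complex.I * ((y * s : ℝ) : ℂ)) *
        (Complex.exp (Complex.I * (((x - y) * s : ℝ) : ℂ)) - 1) *
        ((s ^ ((-1 - p) / 2) : ℝ) : ℂ) := by
    rw [mul_sub, ← Complex.exp_add, stableCurve, stableCurve]
    rw [show Complex.I * ((y * s : ℝ) : ℂ) + Complex.I * (((x - y) * s : ℝ) : ℂ)
      = Complex.I * ((x * s : ℝ) : ℂ) by push_cast; ring]
    ring
  rw [h, norm_mul, norm_mul, Complex.norm_exp_I_mul_ofReal,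
    Complex.norm_exp_I_mul_ofReal_sub_one, one_mul, mul_pow, stableDensity,
    Complex.norm_real, Real.norm_eq_abs, Real.norm_eq_abs, sq_abs, sq_abs]
  congr 1
  rw [← Real.rpow_natCast, ← Real.rpow_mul hs.le]
  congr 1; push_cast; ring

lemma memLp_stableCurve {p : ℝ} (hp0 : 0 < p) (hp2 : p < 2) (t : ℝ) :
    MemLp (stableCurve p t) 2 (volume.restrict (Ioi 0)) := by
  rw [memLp_two_iff_integrable_sq_norm (measurable_stableCurve p t).aestronglyMeasurable]
  refine (integrableOn_stableDensity hp0 hp2 t).congr_fun (fun s hs => ?_) measurableSet_Ioi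
  have := norm_sq_stableCurve_sub p t 0 hs
  have h0 : stableCurve p 0 s = 0 := by simp [stableCurve]
  rw [h0, sub_zero, sub_zero] at this
  exact this.symm

lemma isEuclidean_real_of_lt_two {p : ℝ} (hp0 : 0 < p) (hp2 : p < 2) :
    IsEuclidean (fun x y : ℝ => √(|x - y| ^ p)) := by
  let C := ∫ s in Ioi 0, stableDensity p 1 s
  have hC : 0 < C := integral_stableDensity_one_pos hp0 hp2
  let F : ℝ → Lp ℂ 2 (volume.restrict (Ioi (0 : ℝ))) := fun t => (memLp_stableCurve hp0 hp2 t).toLp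
  have hF : ∀ x y, ‖F x - F y‖ ^ 2 = |x - y| ^ p * C := by
    intro x y
    rw [← MemLp.toLp_sub, ← real_inner_self_eq_norm_sq, L2.inner_def,
      ← integral_stableDensity hp0]
    refine integral_congr_ae ?_
    filter_upwards [((memLp_stableCurve hp0 hp2 x).sub (memLp_stableCurve hp0 hp2 y)).coeFn_toLp,
      ae_restrict_mem measurableSet_Ioi] with s hs hs0
    rw [hs, real_inner_self_eq_norm_sq, Pi.sub_apply, norm_sq_stableCurve_sub p x y hs0]
  refine ⟨Lp ℂ 2 (volume.restrict (Ioi (0 : ℝ))), inferInstance, inferInstance,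
    fun t => (√C)⁻¹ • F t, fun x y => ?_⟩
  rw [← smul_sub, norm_smul, Real.norm_of_nonneg (by positivity),
    ← Real.sqrt_sq (norm_nonneg (F x - F y)), hF, Real.sqrt_mul (by positivity)]
  field_simp

lemma isEuclidean_real {p : ℝ} (hp0 : 0 < p) (hp2 : p ≤ 2) :
    IsEuclidean (fun x y : ℝ => √(|x - y| ^ p)) := by
  rcases hp2.lt_or_eq with h | rfl
  · exact isEuclidean_real_of_lt_two hp0 h
  · refine ⟨ℝ, inferInstance, inferInstance, id, fun x y => ?_⟩
    simp only [Real.rpow_two, Real.sqrt_sq (abs_nonneg _), id, Real.norm_eq_abs]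

/-- The `ℓ²` sum of copies of a Euclidean distance is Euclidean. -/
lemma isEuclidean_pi {X : Type*} {d : X → X → ℝ} (hd : IsEuclidean d) (m : ℕ) :
    IsEuclidean (fun x y : Fin m → X => √(∑ i, d (x i) (y i) ^ 2)) := by
  obtain ⟨H, _, _, Φ, hΦ⟩ := hd
  refine ⟨PiLp 2 (fun _ : Fin m => H), inferInstance, inferInstance,
    fun x => WithLp.toLp 2 fun i => Φ (x i), fun x y => ?_⟩
  rw [PiLp.norm_eq_of_L2]
  simp [hΦ]

lemma isEuclidean_sqrt_sum {p : ℝ} (hp0 : 0 < p) (hp2 : p ≤ 2) (m : ℕ) :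
    IsEuclidean (fun x y : Fin m → ℝ => √(∑ i, |x i - y i| ^ p)) := by
  have h := isEuclidean_pi (isEuclidean_real hp0 hp2) m
  have e : ∀ a b : ℝ, √(|a - b| ^ p) ^ 2 = |a - b| ^ p := fun a b =>
    Real.sq_sqrt (Real.rpow_nonneg (abs_nonneg _) _)
  simpa only [e] using h

/-- For every `m` and every real `0 < p ≤ 2`, the function
`d(x,y) = (∑ i, |x i - y i|^p)^(1/2) = ‖x-y‖_p^(p/2)` is Euclidean on `ℝ^m`;
in particular the square root of the `ℓ1`-distance, `√(‖x-y‖₁)`, is Euclidean. -/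
theorem pnorm_to_half_p_is_euclidean (m : ℕ) (p : ℝ) (hp0 : 0 < p) (hp2 : p ≤ 2) :
    IsEuclidean (fun x y : Fin m → ℝ =>
      (∑ i : Fin m, |x i - y i| ^ p) ^ (1 / 2 : ℝ)) ∧
    IsEuclidean (fun x y : Fin m → ℝ =>
      Real.sqrt (∑ i : Fin m, |x i - y i|)) := by
  constructor
  · simpa only [Real.sqrt_eq_rpow] using isEuclidean_sqrt_sum hp0 hp2 m
  · simpa only [Real.rpow_one] using isEuclidean_sqrt_sum one_pos one_le_two m
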